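/- Vector-valued Hardy–Littlewood maximal inequality in weak Lebesgue spaces: for every 1 < p < ∞ there is a constant C_p > 0 such that for every sequence (f_k) of measurable functions on ℝⁿ with (Σ_k |f_k|²)^{1/2} ∈ L^{(p,∞)}(ℝⁿ), one has ‖(Σ_k (M f_k)²)^{1/2}‖_{L^{(p,∞)}} ≤ C_p ‖(Σ_k |f_k|²)^{1/2}‖_{L^{(p,∞)}}. -/

import Mathlib

/-!
Two vector-valued estimates for the maximal function `M` on sequences `a` of nonnegative functions
are interpolated. Write `F = ‖a‖_r`.

* A strong estimate in `L^q` for `1 < q < r`. Rubio de Francia's iteration gives `u ≥ F` with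
  `M u ≤ B u` and `‖u‖_q ≲ ‖F‖_q`. For `v_k = a_k^{r/q} u^{1-r/q}`, Hölder's inequality on balls
  bounds `M a_k` by `(M v_k)^{q/r} (B u)^{1-q/r}`, so that the scalar maximal theorem in `L^q`
  applies to each `v_k`, while `∑ v_k^q ≤ F^q`.
* A weak estimate for `q > r`, by duality. The Fefferman–Stein inequality
  `∫ (M g)^r w ≤ K ∫ g^r M w`, a consequence of Vitali's covering lemma, is summed over the
  sequence with `w = 1_S`; Hölder's inequality and the maximal theorem for `M 1_S` then bound
  `∫_S ‖M a‖_r^r` by a multiple of `‖F‖_q^r |S|^{1-r/q}`.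

For `F` in weak `L^p`, the strong estimate with some `q < p` handles the sequence on `{F > t}`, the
weak one with some `q > p` handles it on `{F ≤ t}`.
-/

open MeasureTheory ENNReal Set Filter
open scoped NNReal RealInnerProductSpace Topology

noncomputable section

abbrev Rn (n : ℕ) := EuclideanSpace ℝ (Fin n)

/-- Weak `L^p` quasinorm of an `ℝ≥0∞`-valued function on `ℝⁿ`. -/
noncomputable def wquasi {n : ℕ} (g : Rn n → ℝ≥0∞) (p : ℝ) : ℝ≥0∞ :=
  ⨆ t : ℝ≥0, (t : ℝ≥0∞) * (volume {x | (t : ℝ≥0∞) < g x}) ^ (1 / p)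

/-- Weak `L^p` (Lorentz `L^{(p,∞)}`) quasinorm `‖f‖_{L^{(p,∞)}}` of a function on `ℝⁿ`. -/
noncomputable def wLp {n : ℕ} {α : Type*} [NormedAddCommGroup α] (f : Rn n → α) (p : ℝ) : ℝ≥0∞ :=
  wquasi (fun x => (‖f x‖₊ : ℝ≥0∞)) p

/-- Fourier transform (with the paper's normalization). -/
noncomputable def ft {n : ℕ} (f : Rn n → ℂ) (ξ : Rn n) : ℂ :=
  ∫ x, Complex.exp (-Complex.I * ((⟪x, ξ⟫ : ℝ) : ℂ)) * f x

/-- The (uncentered-in-radius, centered) Hardy–Littlewood maximal function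
`M f(x) = sup_{r>0} (1/|B_r|) ∫_{B_r} |f(x−y)| dy`, valued in `ℝ≥0∞`. -/
noncomputable def maximal {n : ℕ} (f : Rn n → ℂ) (x : Rn n) : ℝ≥0∞ :=
  ⨆ (r : ℝ) (_ : 0 < r), (volume (Metric.ball (0 : Rn n) r))⁻¹ *
    ∫⁻ y in Metric.ball (0 : Rn n) r, (‖f (x - y)‖₊ : ℝ≥0∞)

open Metric Module

variable {α β ι : Type*} [MeasurableSpace α] [MeasurableSpace β]

/-! ### Sequence norms and weak Lebesgue spaces -/

section EllNorm

/-- The `ℓ^r` norm of a family of extended nonnegative reals, for `0 < r < ∞`. Applied pointwise to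
a family of functions it gives the square function `(∑ |f_k|²)^{1/2}` when `r = 2`. -/
def ellNorm (r : ℝ) (c : ι → ℝ≥0∞) : ℝ≥0∞ := (∑' i, c i ^ r) ^ (1 / r)

variable {r : ℝ} {c d : ι → ℝ≥0∞}

lemma ellNorm_rpow (hr : 0 < r) (c : ι → ℝ≥0∞) : ellNorm r c ^ r = ∑' i, c i ^ r := by
  rw [ellNorm, ← ENNReal.rpow_mul, one_div_mul_cancel hr.ne', ENNReal.rpow_one]

lemma le_ellNorm (hr : 0 < r) (c : ι → ℝ≥0∞) (i : ι) : c i ≤ ellNorm r c := by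
  rw [← ENNReal.rpow_le_rpow_iff hr, ellNorm_rpow hr]
  exact ENNReal.le_tsum (f := fun i => c i ^ r) i

lemma ellNorm_mono (hr : 0 ≤ r) (h : ∀ i, c i ≤ d i) : ellNorm r c ≤ ellNorm r d := by
  unfold ellNorm
  gcongr
  exact h _

lemma ellNorm_add_le (hr : 1 ≤ r) (c d : ι → ℝ≥0∞) :
    ellNorm r (fun i => c i + d i) ≤ ellNorm r c + ellNorm r d := by
  let _ : MeasurableSpace ι := ⊤
  simpa only [lintegral_count, ellNorm, Pi.add_apply] using
    ENNReal.lintegral_Lp_add_le (μ := Measure.count) (f := c) (g := d)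
      measurable_from_top.aemeasurable measurable_from_top.aemeasurable hr

lemma ellNorm_indicator {X : Type*} (hr : 0 < r) (s : Set X) (a : ι → X → ℝ≥0∞) (x : X) :
    ellNorm r (fun i => s.indicator (a i) x) = s.indicator (fun y => ellNorm r (a · y)) x := by
  by_cases hx : x ∈ s <;> simp [ellNorm, hx, hr]

lemma measurable_ellNorm [Countable ι] {a : ι → α → ℝ≥0∞} (ha : ∀ i, Measurable (a i)) (r : ℝ) :
    Measurable fun x => ellNorm r (a · x) :=
  (Measurable.tsum fun i => (ha i).pow_const r).pow_const _

end EllNorm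

section WeakLpNorm

/-- The quasinorm of weak `L^p`, `sup_t t μ{t < g}^{1/p}`, of an `ℝ≥0∞`-valued function on an
arbitrary measure space. -/
def weakLpNorm (g : α → ℝ≥0∞) (p : ℝ) (μ : Measure α) : ℝ≥0∞ :=
  ⨆ t : ℝ≥0, t * μ {x | t < g x} ^ (1 / p)

variable {μ : Measure α} {g : α → ℝ≥0∞} {p : ℝ}

lemma ofReal_rpow_mul_meas_le_weakLpNorm (hp : 0 < p) (g : α → ℝ≥0∞) (t : ℝ) :
    ENNReal.ofReal t ^ p * μ {x | ENNReal.ofReal t < g x} ≤ weakLpNorm g p μ ^ p := by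
  calc ENNReal.ofReal t ^ p * μ {x | ENNReal.ofReal t < g x}
      = (ENNReal.ofReal t * μ {x | ENNReal.ofReal t < g x} ^ (1 / p)) ^ p := by
        rw [ENNReal.mul_rpow_of_nonneg _ _ hp.le, ← ENNReal.rpow_mul,
          one_div_mul_cancel hp.ne', ENNReal.rpow_one]
    _ ≤ weakLpNorm g p μ ^ p := by
        gcongr
        exact le_iSup (fun t : ℝ≥0 => (t : ℝ≥0∞) * μ {x | t < g x} ^ (1 / p)) t.toNNReal

lemma weakLpNorm_le_of_forall_ofReal (hp : 0 < p) {D : ℝ≥0∞}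
    (h : ∀ t : ℝ, 0 < t → ENNReal.ofReal t ^ p * μ {x | ENNReal.ofReal t < g x} ≤ D ^ p) :
    weakLpNorm g p μ ≤ D := by
  refine iSup_le fun t => ?_
  rcases eq_zero_or_pos t with rfl | ht
  · simp
  rw [← ENNReal.rpow_le_rpow_iff hp, ENNReal.mul_rpow_of_nonneg _ _ hp.le, ← ENNReal.rpow_mul,
    one_div_mul_cancel hp.ne', ENNReal.rpow_one]
  simpa using h t ht

lemma weakLpNorm_rpow_le_lintegral (hp : 0 < p) (hg : Measurable g) :
    weakLpNorm g p μ ^ p ≤ ∫⁻ x, g x ^ p ∂μ := by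
  suffices weakLpNorm g p μ ≤ (∫⁻ x, g x ^ p ∂μ) ^ (1 / p) by
    rwa [one_div, ENNReal.le_rpow_inv_iff hp] at this
  refine weakLpNorm_le_of_forall_ofReal hp fun t _ => ?_
  rw [← ENNReal.rpow_mul, one_div_mul_cancel hp.ne', ENNReal.rpow_one]
  calc ENNReal.ofReal t ^ p * μ {x | ENNReal.ofReal t < g x}
      ≤ ENNReal.ofReal t ^ p * μ {x | ENNReal.ofReal t ^ p ≤ g x ^ p} := by
        gcongr with x
        exact fun hx => ENNReal.rpow_le_rpow (le_of_lt hx) hp.le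
    _ ≤ ∫⁻ x, g x ^ p ∂μ := mul_meas_ge_le_lintegral (hg.pow_const p) _

lemma weakLpNorm_rpow_le_weakLpNorm_rpow (hp : 0 < p) {r : ℝ} (hr : 0 < r) (g : α → ℝ≥0∞)
    (μ : Measure α) : weakLpNorm g p μ ^ r ≤ weakLpNorm (fun x => g x ^ r) (p / r) μ := by
  suffices weakLpNorm g p μ ≤ weakLpNorm (fun x => g x ^ r) (p / r) μ ^ r⁻¹ by
    rwa [ENNReal.le_rpow_inv_iff hr] at this
  refine weakLpNorm_le_of_forall_ofReal hp fun t ht => ?_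
  have hpr : r * (p / r) = p := mul_div_cancel₀ p hr.ne'
  have h := ofReal_rpow_mul_meas_le_weakLpNorm (μ := μ) (div_pos hp hr) (fun x => g x ^ r) (t ^ r)
  simp_rw [← ENNReal.ofReal_rpow_of_pos ht, ENNReal.rpow_lt_rpow_iff hr] at h
  rw [← ENNReal.rpow_mul, hpr] at h
  rwa [← ENNReal.rpow_mul, inv_mul_eq_div]

/-- A level set may have infinite measure, so the hypothesis is tested on its finite pieces. -/
lemma weakLpNorm_le_of_setLIntegral_le [SigmaFinite μ] (hp : 0 < p) (hg : Measurable g) {A : ℝ≥0∞}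
    (h : ∀ s, MeasurableSet s → μ s < ⊤ → ∫⁻ x in s, g x ∂μ ≤ A * μ s ^ (1 - 1 / p)) :
    weakLpNorm g p μ ≤ A := by
  have hpiece : ∀ t : ℝ≥0, ∀ s, MeasurableSet s → μ s < ⊤ → (∀ x ∈ s, t < g x) →
      t * μ s ^ (1 / p) ≤ A := by
    intro t s hs hfin hlt
    rcases eq_or_ne (μ s) 0 with h0 | h0
    · simp [h0, hp]
    rw [← ENNReal.mul_le_mul_iff_left (c := μ s ^ (1 - 1 / p))
      (ENNReal.rpow_pos (pos_iff_ne_zero.2 h0) hfin.ne).ne'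
      (ENNReal.rpow_ne_top_of_ne_zero h0 hfin.ne), mul_assoc,
      ← ENNReal.rpow_add _ _ h0 hfin.ne, add_sub_cancel, ENNReal.rpow_one, ← setLIntegral_const]
    exact (setLIntegral_mono' hs fun x hx => (hlt x hx).le).trans (h s hs hfin)
  refine iSup_le fun t => ?_
  let E : ℕ → Set α := fun N => {x | t < g x} ∩ spanningSets μ N
  have hE : Monotone E := fun i j hij => inter_subset_inter_right _ (monotone_spanningSets μ hij)
  have hunion : {x | (t : ℝ≥0∞) < g x} = ⋃ N, E N := by
    rw [← inter_iUnion, iUnion_spanningSets, inter_univ]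
  rw [hunion, hE.measure_iUnion]
  change t * ENNReal.orderIsoRpow (1 / p) (by positivity) (⨆ N, μ (E N)) ≤ A
  rw [OrderIso.map_iSup, ENNReal.mul_iSup]
  exact iSup_le fun N => hpiece t (E N)
    ((measurableSet_lt measurable_const hg).inter (measurableSet_spanningSets μ N))
    ((measure_mono inter_subset_right).trans_lt (measure_spanningSets_lt_top μ N)) fun x hx => hx.1

end WeakLpNorm

/-! ### Layer cake formulas and interpolation -/

section LayerCake

variable {μ : Measure α} {F : α → ℝ≥0∞} {p q : ℝ}

lemma setLIntegral_Ioc_ofReal_rpow {s b : ℝ} (hs : 0 < s) (hb : 0 ≤ b) :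
    ∫⁻ t in Ioc 0 b, ENNReal.ofReal (t ^ (s - 1)) = ENNReal.ofReal (b ^ s / s) := by
  have hint : IntegrableOn (fun t : ℝ => t ^ (s - 1)) (Ioc 0 b) :=
    (intervalIntegrable_iff_integrableOn_Ioc_of_le hb).1
      (intervalIntegral.intervalIntegrable_rpow' (by linarith))
  rw [← ofReal_integral_eq_lintegral_ofReal hint, ← intervalIntegral.integral_of_le hb,
    integral_rpow (Or.inl (by linarith)), sub_add_cancel, Real.zero_rpow hs.ne', sub_zero]
  filter_upwards [ae_restrict_mem measurableSet_Ioc] with t ht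
  exact Real.rpow_nonneg ht.1.le _

lemma setLIntegral_Ioi_ofReal_rpow {s b : ℝ} (hs : s < 0) (hb : 0 < b) :
    ∫⁻ t in Ioi b, ENNReal.ofReal (t ^ (s - 1)) = ENNReal.ofReal (b ^ s / -s) := by
  have hlt : s - 1 < -1 := by linarith
  rw [← ofReal_integral_eq_lintegral_ofReal (integrableOn_Ioi_rpow_of_lt hlt hb),
    integral_Ioi_rpow_of_lt hlt hb, sub_add_cancel, neg_div, div_neg]
  filter_upwards [ae_restrict_mem measurableSet_Ioi] with t ht
  exact Real.rpow_nonneg (hb.trans ht).le _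

lemma setLIntegral_Ioi_zero_ofReal_rpow (s : ℝ) :
    ∫⁻ t in Ioi (0 : ℝ), ENNReal.ofReal (t ^ s) = ⊤ := by
  by_contra h
  refine not_integrableOn_Ioi_rpow s ((lintegral_ofReal_ne_top_iff_integrable
    (by fun_prop) ?_).1 h)
  filter_upwards [ae_restrict_mem measurableSet_Ioi] with t ht
  exact Real.rpow_nonneg (le_of_lt ht) _

lemma lintegral_rpow_eq_lintegral_meas_ofReal_lt_mul (μ : Measure α) (hF : Measurable F)
    (hq : 0 < q) :
    ∫⁻ x, F x ^ q ∂μ = ENNReal.ofReal q *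
      ∫⁻ t in Ioi (0 : ℝ), μ {x | ENNReal.ofReal t < F x} * ENNReal.ofReal (t ^ (q - 1)) := by
  by_cases htop : μ {x | F x = ⊤} = 0
  · have hlt : ∀ᵐ x ∂μ, F x ≠ ⊤ := measure_eq_zero_iff_ae_notMem.1 htop
    have hpow : ∫⁻ x, F x ^ q ∂μ = ∫⁻ x, ENNReal.ofReal ((F x).toReal ^ q) ∂μ := by
      refine lintegral_congr_ae ?_
      filter_upwards [hlt] with x hx
      rw [← ENNReal.ofReal_rpow_of_nonneg toReal_nonneg hq.le, ofReal_toReal hx]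
    have hlevel : ∀ t ∈ Ioi (0 : ℝ), μ {x | t < (F x).toReal} = μ {x | ENNReal.ofReal t < F x} := by
      intro t ht
      refine measure_congr ?_
      filter_upwards [hlt] with x hx
      exact propext (ENNReal.ofReal_lt_iff_lt_toReal (le_of_lt ht) hx).symm
    rw [hpow, lintegral_rpow_eq_lintegral_meas_lt_mul μ (.of_forall fun x => toReal_nonneg)
      hF.ennreal_toReal.aemeasurable hq]
    congr 1
    exact setLIntegral_congr_fun measurableSet_Ioi fun t ht => by rw [hlevel t ht]
  · have hleft : ∫⁻ x, F x ^ q ∂μ = ⊤ := by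
      refine lintegral_eq_top_of_measure_eq_top_ne_zero (hF.pow_const q).aemeasurable ?_
      simpa [ENNReal.rpow_eq_top_iff, hq, hq.not_gt] using htop
    have hright : ∫⁻ t in Ioi (0 : ℝ), μ {x | F x = ⊤} * ENNReal.ofReal (t ^ (q - 1)) = ⊤ := by
      rw [lintegral_const_mul _ (by fun_prop), setLIntegral_Ioi_zero_ofReal_rpow,
        ENNReal.mul_top htop]
    rw [hleft, eq_comm, ENNReal.mul_eq_top]
    refine .inl ⟨by simpa using hq, top_le_iff.1 (hright.symm.trans_le ?_)⟩
    gcongr with t x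
    rintro hx
    exact hx ▸ ENNReal.ofReal_lt_top

lemma meas_ofReal_lt_le_weakLpNorm (hp : 0 < p) (F : α → ℝ≥0∞) {t : ℝ} (ht : 0 < t) :
    μ {x | ENNReal.ofReal t < F x} ≤ weakLpNorm F p μ ^ p * ENNReal.ofReal (t ^ (-p)) := by
  have htp : 0 < t ^ p := Real.rpow_pos_of_pos ht p
  have h := ofReal_rpow_mul_meas_le_weakLpNorm (μ := μ) hp F t
  rw [ENNReal.ofReal_rpow_of_nonneg ht.le hp.le, mul_comm] at h
  rwa [Real.rpow_neg ht.le, ENNReal.ofReal_inv_of_pos htp, ← div_eq_mul_inv,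
    ENNReal.le_div_iff_mul_le (.inl (ENNReal.ofReal_pos.2 htp).ne') (.inl ENNReal.ofReal_ne_top)]

lemma meas_ofReal_lt_mul_rpow_le_weakLpNorm (hp : 0 < p) (F : α → ℝ≥0∞) {t : ℝ} (ht : 0 < t) :
    μ {x | ENNReal.ofReal t < F x} * ENNReal.ofReal (t ^ (q - 1)) ≤
      weakLpNorm F p μ ^ p * ENNReal.ofReal (t ^ (q - p - 1)) := by
  rw [show q - p - 1 = -p + (q - 1) by ring, Real.rpow_add ht, ENNReal.ofReal_mul (by positivity),
    ← mul_assoc]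
  gcongr
  exact meas_ofReal_lt_le_weakLpNorm hp F ht

lemma setLIntegral_Ioi_meas_ofReal_lt_mul_rpow_le (hp : 0 < p) (hqp : q < p) (F : α → ℝ≥0∞)
    {b : ℝ} (hb : 0 < b) :
    ∫⁻ t in Ioi b, μ {x | ENNReal.ofReal t < F x} * ENNReal.ofReal (t ^ (q - 1)) ≤
      weakLpNorm F p μ ^ p * ENNReal.ofReal (b ^ (q - p) / (p - q)) := by
  rw [← neg_sub q p, ← setLIntegral_Ioi_ofReal_rpow (sub_neg.2 hqp) hb,
    ← lintegral_const_mul _ (by fun_prop)]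
  exact setLIntegral_mono' measurableSet_Ioi fun t ht =>
    meas_ofReal_lt_mul_rpow_le_weakLpNorm hp F (hb.trans ht)

lemma setLIntegral_Ioc_meas_ofReal_lt_mul_rpow_le (hp : 0 < p) (hpq : p < q) (F : α → ℝ≥0∞)
    {b : ℝ} (hb : 0 ≤ b) :
    ∫⁻ t in Ioc 0 b, μ {x | ENNReal.ofReal t < F x} * ENNReal.ofReal (t ^ (q - 1)) ≤
      weakLpNorm F p μ ^ p * ENNReal.ofReal (b ^ (q - p) / (q - p)) := by
  rw [← setLIntegral_Ioc_ofReal_rpow (sub_pos.2 hpq) hb, ← lintegral_const_mul _ (by fun_prop)]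
  exact setLIntegral_mono' measurableSet_Ioc fun t ht =>
    meas_ofReal_lt_mul_rpow_le_weakLpNorm hp F ht.1

lemma lintegral_indicator_gt_rpow_le (hF : Measurable F) (hq : 0 < q) (hqp : q < p) {b : ℝ}
    (hb : 0 < b) :
    ∫⁻ x, {x | ENNReal.ofReal b < F x}.indicator F x ^ q ∂μ ≤
      ENNReal.ofReal (p / (p - q)) * weakLpNorm F p μ ^ p * ENNReal.ofReal (b ^ (q - p)) := by
  have hp : 0 < p := hq.trans hqp
  have hpq : 0 < p - q := sub_pos.2 hqp
  set W := weakLpNorm F p μ ^ p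
  set H := {x | ENNReal.ofReal b < F x}.indicator F
  have hH : Measurable H := hF.indicator (measurableSet_lt measurable_const hF)
  have hHF (x : α) : H x ≤ F x := indicator_le_self _ F x
  have hlow : ∫⁻ t in Ioc 0 b, μ {x | ENNReal.ofReal t < H x} * ENNReal.ofReal (t ^ (q - 1)) ≤
      W * ENNReal.ofReal (b ^ (q - p) / q) := by
    calc _ ≤ ∫⁻ t in Ioc 0 b, W * ENNReal.ofReal (b ^ (-p)) * ENNReal.ofReal (t ^ (q - 1)) := by
          gcongr with t
          refine (measure_mono fun x hx => ?_).trans (meas_ofReal_lt_le_weakLpNorm hp F hb)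
          exact mem_of_indicator_ne_zero (f := F) (ne_bot_of_gt hx)
      _ = W * ENNReal.ofReal (b ^ (q - p) / q) := by
          rw [lintegral_const_mul _ (by fun_prop), setLIntegral_Ioc_ofReal_rpow hq hb.le, mul_assoc,
            ← ENNReal.ofReal_mul (by positivity), ← mul_div_assoc, ← Real.rpow_add hb,
            neg_add_eq_sub]
  have hhigh : ∫⁻ t in Ioi b, μ {x | ENNReal.ofReal t < H x} * ENNReal.ofReal (t ^ (q - 1)) ≤
      W * ENNReal.ofReal (b ^ (q - p) / (p - q)) := by
    refine le_trans ?_ (setLIntegral_Ioi_meas_ofReal_lt_mul_rpow_le hp hqp F hb)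
    gcongr with t x
    exact hHF x
  have hconst : q * (b ^ (q - p) / q + b ^ (q - p) / (p - q)) = p / (p - q) * b ^ (q - p) := by
    field_simp
    ring
  rw [lintegral_rpow_eq_lintegral_meas_ofReal_lt_mul μ hH hq, ← Ioc_union_Ioi_eq_Ioi hb.le,
    lintegral_union measurableSet_Ioi (Ioc_disjoint_Ioi le_rfl), mul_right_comm,
    ← ENNReal.ofReal_mul (by positivity), ← hconst, ENNReal.ofReal_mul hq.le, mul_assoc,
    mul_comm _ W, ENNReal.ofReal_add (by positivity) (by positivity), mul_add W]
  gcongr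

lemma lintegral_indicator_compl_gt_rpow_le (hF : Measurable F) (hp : 0 < p) (hpq : p < q) {b : ℝ}
    (hb : 0 < b) :
    ∫⁻ x, {x | ENNReal.ofReal b < F x}ᶜ.indicator F x ^ q ∂μ ≤
      ENNReal.ofReal (q / (q - p)) * weakLpNorm F p μ ^ p * ENNReal.ofReal (b ^ (q - p)) := by
  have hq : 0 < q := hp.trans hpq
  set H := {x | ENNReal.ofReal b < F x}ᶜ.indicator F
  have hH : Measurable H := hF.indicator (measurableSet_lt measurable_const hF).compl
  have hHF (x : α) : H x ≤ F x := indicator_le_self _ F x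
  have hHb (x : α) : H x ≤ ENNReal.ofReal b := indicator_le (fun y hy => not_lt.1 hy) x
  have hlow : ∫⁻ t in Ioc 0 b, μ {x | ENNReal.ofReal t < H x} * ENNReal.ofReal (t ^ (q - 1)) ≤
      weakLpNorm F p μ ^ p * ENNReal.ofReal (b ^ (q - p) / (q - p)) := by
    refine le_trans ?_ (setLIntegral_Ioc_meas_ofReal_lt_mul_rpow_le hp hpq F hb.le)
    gcongr with t x
    exact hHF x
  have hhigh :
      ∫⁻ t in Ioi b, μ {x | ENNReal.ofReal t < H x} * ENNReal.ofReal (t ^ (q - 1)) = 0 := by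
    refine setLIntegral_eq_zero measurableSet_Ioi fun t ht => ?_
    have hempty : {x | ENNReal.ofReal t < H x} = ∅ := eq_empty_of_forall_notMem fun x =>
      not_lt.2 ((hHb x).trans (ENNReal.ofReal_le_ofReal (le_of_lt ht)))
    simp [hempty]
  rw [lintegral_rpow_eq_lintegral_meas_ofReal_lt_mul μ hH hq, ← Ioc_union_Ioi_eq_Ioi hb.le,
    lintegral_union measurableSet_Ioi (Ioc_disjoint_Ioi le_rfl), hhigh, add_zero, mul_right_comm,
    ← ENNReal.ofReal_mul (by positivity), div_mul_eq_mul_div, mul_div_assoc,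
    ENNReal.ofReal_mul hq.le, mul_assoc, mul_comm _ (weakLpNorm F p μ ^ p)]
  gcongr

end LayerCake

section Interpolation

variable {μ : Measure α} {F G : α → ℝ≥0∞} {p q : ℝ}

/-- Only the part of `g` above `t / 2` matters: the rest is mapped below `t / 2`. -/
lemma mul_meas_lt_le_of_weakType_one_one {ν : Measure β} {T : (α → ℝ≥0∞) → β → ℝ≥0∞} {C : ℝ≥0∞}
    (h_add : ∀ g h, Measurable g → ∀ x, T (g + h) x ≤ T g x + T h x)
    (h_bdd : ∀ g c, (∀ x, g x ≤ c) → ∀ x, T g x ≤ c)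
    (h_weak : ∀ g, Measurable g → ∀ t : ℝ≥0∞, t * ν {x | t < T g x} ≤ C * ∫⁻ x, g x ∂μ)
    {g : α → ℝ≥0∞} (hg : Measurable g) (t : ℝ≥0∞) :
    t * ν {x | t < T g x} ≤ 2 * C * ∫⁻ x in {x | t < 2 * g x}, g x ∂μ := by
  set s := {x | t < 2 * g x}
  have hs : MeasurableSet s := measurableSet_lt measurable_const (hg.const_mul 2)
  have hsmall : ∀ x, sᶜ.indicator g x ≤ t / 2 := indicator_le fun x hx => by
    rw [ENNReal.le_div_iff_mul_le (by simp) (by simp), mul_comm]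
    exact not_lt.1 hx
  have hsub : {x | t < T g x} ⊆ {x | t / 2 < T (s.indicator g) x} := by
    intro x (hx : t < T g x)
    rw [← ENNReal.add_halves t, ← indicator_self_add_compl s g] at hx
    exact lt_of_add_lt_add_right (hx.trans_le ((h_add _ _ (hg.indicator hs) x).trans
      (add_le_add_right (h_bdd _ _ hsmall x) _)))
  calc t * ν {x | t < T g x} ≤ t * ν {x | t / 2 < T (s.indicator g) x} := by gcongr
    _ = 2 * (t / 2 * ν {x | t / 2 < T (s.indicator g) x}) := by
        rw [← mul_assoc, ENNReal.mul_div_cancel (by simp) (by simp)]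
    _ ≤ 2 * (C * ∫⁻ x, s.indicator g x ∂μ) := by
        gcongr 2 * ?_
        exact h_weak _ (hg.indicator hs) _
    _ = 2 * C * ∫⁻ x in s, g x ∂μ := by rw [lintegral_indicator hs, mul_assoc]

lemma lintegral_withDensity_meas_ofReal_lt_two_mul (μ : Measure α) {g : α → ℝ≥0∞}
    (hg : Measurable g) (hq : 1 < q) :
    ∫⁻ t in Ioi (0 : ℝ), μ.withDensity g {x | ENNReal.ofReal t < 2 * g x} *
      ENNReal.ofReal (t ^ (q - 1 - 1)) =
        (ENNReal.ofReal (q - 1))⁻¹ * (2 ^ (q - 1) * ∫⁻ x, g x ^ q ∂μ) := by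
  have hq1 : 0 < q - 1 := sub_pos.2 hq
  have h2g : Measurable fun x => 2 * g x := hg.const_mul 2
  have hpow (x : α) : 2 ^ (q - 1) * g x ^ q = (g * fun y => (2 * g y) ^ (q - 1)) x := by
    rw [Pi.mul_apply, ENNReal.mul_rpow_of_nonneg _ _ hq1.le, mul_left_comm]
    nth_rewrite 2 [← ENNReal.rpow_one (g x)]
    rw [← ENNReal.rpow_add_of_nonneg _ _ zero_le_one hq1.le, add_sub_cancel]
  rw [← lintegral_const_mul _ (hg.pow_const q), lintegral_congr hpow,
    ← lintegral_withDensity_eq_lintegral_mul _ hg (h2g.pow_const _),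
    lintegral_rpow_eq_lintegral_meas_ofReal_lt_mul _ h2g hq1, ← mul_assoc,
    ENNReal.inv_mul_cancel (by simpa using hq) ENNReal.ofReal_ne_top, one_mul]

lemma lintegral_rpow_le_of_weakType_one_one {ν : Measure β} {T : (α → ℝ≥0∞) → β → ℝ≥0∞}
    {C : ℝ≥0∞} (hq : 1 < q)
    (h_add : ∀ g h, Measurable g → ∀ x, T (g + h) x ≤ T g x + T h x)
    (h_bdd : ∀ g c, (∀ x, g x ≤ c) → ∀ x, T g x ≤ c)
    (h_meas : ∀ g, Measurable g → Measurable (T g))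
    (h_weak : ∀ g, Measurable g → ∀ t : ℝ≥0∞, t * ν {x | t < T g x} ≤ C * ∫⁻ x, g x ∂μ)
    {g : α → ℝ≥0∞} (hg : Measurable g) :
    ∫⁻ x, T g x ^ q ∂ν ≤ C * ENNReal.ofReal (2 ^ q * (q / (q - 1))) * ∫⁻ x, g x ^ q ∂μ := by
  have hq1 : 0 < q - 1 := sub_pos.2 hq
  have hlevel (t : ℝ) (ht : 0 < t) :
      ν {x | ENNReal.ofReal t < T g x} * ENNReal.ofReal (t ^ (q - 1)) ≤
        2 * C * μ.withDensity g {x | ENNReal.ofReal t < 2 * g x} *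
          ENNReal.ofReal (t ^ (q - 1 - 1)) := by
    rw [withDensity_apply _ (measurableSet_lt measurable_const (hg.const_mul 2)),
      ← sub_add_cancel (q - 1) 1, Real.rpow_add_one ht.ne',
      ENNReal.ofReal_mul (by positivity), add_sub_cancel_right, mul_comm, mul_assoc, mul_comm]
    gcongr ?_ * _
    exact mul_meas_lt_le_of_weakType_one_one h_add h_bdd h_weak hg _
  have hconst : ENNReal.ofReal (2 ^ q * (q / (q - 1))) =
      ENNReal.ofReal q * 2 * (ENNReal.ofReal (q - 1))⁻¹ * 2 ^ (q - 1) := by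
    rw [← ENNReal.ofReal_inv_of_pos hq1, ← ENNReal.ofReal_ofNat,
      ENNReal.ofReal_rpow_of_pos two_pos, ← ENNReal.ofReal_mul (by positivity),
      ← ENNReal.ofReal_mul (by positivity), ← ENNReal.ofReal_mul (by positivity),
      Real.rpow_sub_one two_ne_zero]
    congr 1
    field_simp
  calc ∫⁻ x, T g x ^ q ∂ν
      ≤ ENNReal.ofReal q * ∫⁻ t in Ioi (0 : ℝ), 2 * C *
        μ.withDensity g {x | ENNReal.ofReal t < 2 * g x} * ENNReal.ofReal (t ^ (q - 1 - 1)) := by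
        rw [lintegral_rpow_eq_lintegral_meas_ofReal_lt_mul ν (h_meas g hg) (by linarith)]
        gcongr 1
        exact setLIntegral_mono' measurableSet_Ioi hlevel
    _ = C * ENNReal.ofReal (2 ^ q * (q / (q - 1))) * ∫⁻ x, g x ^ q ∂μ := by
        simp_rw [mul_assoc (2 * C)]
        rw [lintegral_const_mul, lintegral_withDensity_meas_ofReal_lt_two_mul μ hg hq, hconst]
        · ring
        have hanti : Antitone fun t : ℝ => μ.withDensity g {x | ENNReal.ofReal t < 2 * g x} :=
          fun s t hst => measure_mono fun x hx => (ENNReal.ofReal_le_ofReal hst).trans_lt hx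
        exact hanti.measurable.mul (by fun_prop)

lemma ofReal_rpow_mul_meas_half_lt_le (hq : 0 < q) {t : ℝ} (ht : 0 < t) {Y : ℝ≥0∞}
    (h : weakLpNorm G q μ ^ q ≤ Y * ENNReal.ofReal (t ^ (q - p))) :
    ENNReal.ofReal t ^ p * μ {x | ENNReal.ofReal (t / 2) < G x} ≤ 2 ^ q * Y := by
  have ht2 : 0 < t / 2 := by positivity
  have hscale : ENNReal.ofReal t ^ p =
      2 ^ q * ENNReal.ofReal (t ^ (p - q)) * ENNReal.ofReal (t / 2) ^ q := by
    rw [← ENNReal.ofReal_ofNat, ENNReal.ofReal_rpow_of_pos ht, ENNReal.ofReal_rpow_of_pos two_pos,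
      ENNReal.ofReal_rpow_of_pos ht2, ← ENNReal.ofReal_mul (by positivity),
      ← ENNReal.ofReal_mul (by positivity), mul_right_comm, ← Real.mul_rpow two_pos.le ht2.le,
      mul_div_cancel₀ _ two_ne_zero, ← Real.rpow_add ht, add_sub_cancel]
  calc ENNReal.ofReal t ^ p * μ {x | ENNReal.ofReal (t / 2) < G x}
      ≤ 2 ^ q * ENNReal.ofReal (t ^ (p - q)) * (Y * ENNReal.ofReal (t ^ (q - p))) := by
        rw [hscale, mul_assoc]
        gcongr _ * ?_
        exact (ofReal_rpow_mul_meas_le_weakLpNorm hq G (t / 2)).trans h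
    _ = 2 ^ q * Y * ENNReal.ofReal (t ^ (p - q) * t ^ (q - p)) := by
        rw [ENNReal.ofReal_mul (by positivity)]
        ring
    _ = 2 ^ q * Y := by
        rw [← Real.rpow_add ht, sub_add_sub_cancel, sub_self, Real.rpow_zero, ENNReal.ofReal_one,
          mul_one]

/-- Real interpolation: at each height `t` the two parts of `F` are taken above and below `t`. -/
lemma weakLpNorm_le_of_truncation {q₀ q₁ : ℝ} (hF : Measurable F) (hq₀ : 0 < q₀) (hq₀p : q₀ < p)
    (hpq₁ : p < q₁) {C₀ C₁ : ℝ≥0∞}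
    (h : ∀ t : ℝ, 0 < t → ∃ G₀ G₁ : α → ℝ≥0∞, (∀ x, G x ≤ G₀ x + G₁ x) ∧
      weakLpNorm G₀ q₀ μ ^ q₀ ≤ C₀ * ∫⁻ x, {x | ENNReal.ofReal t < F x}.indicator F x ^ q₀ ∂μ ∧
      weakLpNorm G₁ q₁ μ ^ q₁ ≤ C₁ * ∫⁻ x, {x | ENNReal.ofReal t < F x}ᶜ.indicator F x ^ q₁ ∂μ) :
    weakLpNorm G p μ ≤ (2 ^ q₀ * (C₀ * ENNReal.ofReal (p / (p - q₀))) +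
      2 ^ q₁ * (C₁ * ENNReal.ofReal (q₁ / (q₁ - p)))) ^ (1 / p) * weakLpNorm F p μ := by
  have hp : 0 < p := hq₀.trans hq₀p
  refine weakLpNorm_le_of_forall_ofReal hp fun t ht => ?_
  obtain ⟨G₀, G₁, hG, h₀, h₁⟩ := h t ht
  have hsub : {x | ENNReal.ofReal t < G x} ⊆
      {x | ENNReal.ofReal (t / 2) < G₀ x} ∪ {x | ENNReal.ofReal (t / 2) < G₁ x} := by
    intro x (hx : ENNReal.ofReal t < G x)
    by_contra! hcon
    simp only [mem_union, mem_ofPred_eq, not_or, not_lt] at hcon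
    refine hx.not_ge ((hG x).trans ((add_le_add hcon.1 hcon.2).trans_eq ?_))
    rw [← ENNReal.ofReal_add (by positivity) (by positivity), add_halves]
  have hhigh := ofReal_rpow_mul_meas_half_lt_le (p := p) hq₀ ht (h₀.trans
    (by grw [lintegral_indicator_gt_rpow_le hF hq₀ hq₀p ht, ← mul_assoc]))
  have hlow := ofReal_rpow_mul_meas_half_lt_le (p := p) (hp.trans hpq₁) ht (h₁.trans
    (by grw [lintegral_indicator_compl_gt_rpow_le hF hp hpq₁ ht, ← mul_assoc]))
  calc ENNReal.ofReal t ^ p * μ {x | ENNReal.ofReal t < G x}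
      ≤ ENNReal.ofReal t ^ p * (μ {x | ENNReal.ofReal (t / 2) < G₀ x} +
          μ {x | ENNReal.ofReal (t / 2) < G₁ x}) := by
        gcongr
        exact (measure_mono hsub).trans (measure_union_le _ _)
    _ ≤ _ := (mul_add _ _ _).trans_le (add_le_add hhigh hlow)
    _ = _ := by
        rw [ENNReal.mul_rpow_of_nonneg _ _ hp.le, ← ENNReal.rpow_mul, one_div_mul_cancel hp.ne',
          ENNReal.rpow_one]
        ring

end Interpolation

/-! ### The centered maximal function -/

section Covering

variable {X : Type*} [PseudoMetricSpace X] [TopologicalSpace.SeparableSpace X] [MeasurableSpace X]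
  [OpensMeasurableSpace X]

lemma measure_le_of_forall_exists_closedBall_le_ball {ν ρ : Measure X} {s : Set X} {R : ℝ}
    (h : ∀ x ∈ s, ∃ r, 0 < r ∧ r ≤ R ∧ ν (closedBall x (5 * r)) ≤ ρ (ball x r)) :
    ν s ≤ ρ univ := by
  choose! r hr0 hrR hr using h
  obtain ⟨u, hus, hdisj, hcov⟩ :=
    Vitali.exists_disjoint_subfamily_covering_enlargement_closedBall s id r R hrR 5 (by norm_num)
  have hdisj_ball : u.PairwiseDisjoint fun b => ball b (r b) :=
    hdisj.mono fun b => ball_subset_closedBall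
  have hcount : u.Countable := hdisj_ball.countable_of_isOpen (fun _ _ => isOpen_ball)
    fun b hb => ⟨b, mem_ball_self (hr0 b (hus hb))⟩
  have hcover : s ⊆ ⋃ b ∈ u, closedBall b (5 * r b) := by
    intro x hx
    obtain ⟨b, hb, hsub⟩ := hcov x hx
    exact mem_biUnion hb (hsub (mem_closedBall_self (hr0 x hx).le))
  calc ν s ≤ ∑' b : u, ν (closedBall (b : X) (5 * r b)) :=
        (measure_mono hcover).trans (measure_biUnion_le ν hcount _)
    _ ≤ ∑' b : u, ρ (ball (b : X) (r b)) := ENNReal.tsum_le_tsum fun b => hr b (hus b.2)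
    _ = ρ (⋃ b ∈ u, ball b (r b)) :=
        (measure_biUnion hcount hdisj_ball fun _ _ => measurableSet_ball).symm
    _ ≤ ρ univ := measure_mono (subset_univ _)

end Covering

section LowerSemicontinuous

variable {X : Type*} [PseudoMetricSpace X] [MeasurableSpace X]

/-- A slightly smaller ball still carries almost all of the integral, and it is contained in the
balls of the original radius with nearby centers. -/
lemma lowerSemicontinuous_setLIntegral_ball (μ : Measure X) (g : X → ℝ≥0∞) (r : ℝ) :
    LowerSemicontinuous fun x => ∫⁻ y in ball x r, g y ∂μ := by
  intro x a (ha : a < ∫⁻ y in ball x r, g y ∂μ)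
  have hmono : Monotone fun k : ℕ => ball x (r - 1 / ((k : ℝ) + 1)) := fun i j hij =>
    ball_subset_ball (by gcongr)
  have hunion : ball x r = ⋃ k : ℕ, ball x (r - 1 / ((k : ℝ) + 1)) := by
    refine Subset.antisymm (fun y hy => ?_) (iUnion_subset fun k => ball_subset_ball ?_)
    · obtain ⟨k, hk⟩ := exists_nat_one_div_lt (sub_pos.2 (mem_ball.1 hy))
      exact mem_iUnion.2 ⟨k, mem_ball.2 (by linarith)⟩
    · exact sub_le_self _ (by positivity)
  rw [hunion, setLIntegral_iUnion_of_directed g hmono.directed_le] at ha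
  obtain ⟨k, hk⟩ := lt_iSup_iff.1 ha
  filter_upwards [ball_mem_nhds x (show (0 : ℝ) < 1 / (k + 1) by positivity)] with z hz
  refine hk.trans_le (lintegral_mono_set (ball_subset_ball' ?_))
  rw [mem_ball, dist_comm] at hz
  linarith

end LowerSemicontinuous

/-- The centered Hardy–Littlewood maximal function of an `ℝ≥0∞`-valued function, with respect to a
measure `μ`. -/
def centeredMaximal {X : Type*} [PseudoMetricSpace X] [MeasurableSpace X] (μ : Measure X)
    (g : X → ℝ≥0∞) (x : X) : ℝ≥0∞ :=
  ⨆ (r : ℝ) (_ : 0 < r), ⨍⁻ y in ball x r, g y ∂μ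

section CenteredMaximal

variable {X : Type*} [PseudoMetricSpace X] [MeasurableSpace X] {μ : Measure X} {f g v u : X → ℝ≥0∞}

lemma setLAverage_ball_le_centeredMaximal (μ : Measure X) (g : X → ℝ≥0∞) (x : X) {r : ℝ}
    (hr : 0 < r) : ⨍⁻ y in ball x r, g y ∂μ ≤ centeredMaximal μ g x :=
  le_iSup₂ (f := fun (r : ℝ) (_ : 0 < r) => ⨍⁻ y in ball x r, g y ∂μ) r hr

lemma setLIntegral_ball_le_mul_centeredMaximal [ProperSpace X] [μ.IsOpenPosMeasure]
    [IsFiniteMeasureOnCompacts μ] (g : X → ℝ≥0∞) (x : X) {r : ℝ} (hr : 0 < r) :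
    ∫⁻ y in ball x r, g y ∂μ ≤ μ (ball x r) * centeredMaximal μ g x := by
  rw [mul_comm, ← ENNReal.div_le_iff_le_mul (.inl (measure_ball_pos μ x hr).ne')
    (.inl measure_ball_lt_top.ne), ← setLAverage_eq]
  exact setLAverage_ball_le_centeredMaximal μ g x hr

lemma centeredMaximal_add_le (hg : Measurable g) (x : X) :
    centeredMaximal μ (g + u) x ≤ centeredMaximal μ g x + centeredMaximal μ u x := by
  refine iSup₂_le fun r hr => ?_
  grw [← setLAverage_ball_le_centeredMaximal μ g x hr,
    ← setLAverage_ball_le_centeredMaximal μ u x hr]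
  simp only [setLAverage_eq, Pi.add_apply, lintegral_add_left hg, ENNReal.add_div, le_refl]

lemma centeredMaximal_le_of_forall_le {c : ℝ≥0∞} (h : ∀ x, g x ≤ c) (x : X) :
    centeredMaximal μ g x ≤ c := by
  refine iSup₂_le fun r _ => ?_
  rw [setLAverage_eq]
  refine ENNReal.div_le_of_le_mul ?_
  rw [← setLIntegral_const]
  gcongr
  exact h _

lemma centeredMaximal_tsum_le {g : ℕ → X → ℝ≥0∞} (hg : ∀ k, Measurable (g k)) (c : ℕ → ℝ≥0∞)
    (x : X) :
    centeredMaximal μ (fun y => ∑' k, c k * g k y) x ≤ ∑' k, c k * centeredMaximal μ (g k) x := by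
  refine iSup₂_le fun r hr => ?_
  rw [setLAverage_eq, lintegral_tsum fun k => ((hg k).const_mul _).aemeasurable, div_eq_mul_inv,
    ← ENNReal.tsum_mul_right]
  refine ENNReal.tsum_le_tsum fun k => ?_
  grw [lintegral_const_mul _ (hg k), mul_assoc, ← div_eq_mul_inv, ← setLAverage_eq,
    setLAverage_ball_le_centeredMaximal μ (g k) x hr]

lemma centeredMaximal_le_rpow_mul_rpow (hv : Measurable v) (hu : Measurable u) {s t : ℝ}
    (hs : 0 ≤ s) (ht : 0 ≤ t) (hst : s + t = 1) (h : ∀ᵐ x ∂μ, f x ≤ v x ^ s * u x ^ t) (x : X) :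
    centeredMaximal μ f x ≤ centeredMaximal μ v x ^ s * centeredMaximal μ u x ^ t := by
  refine iSup₂_le fun r hr => ?_
  set V := (μ (ball x r))⁻¹ with hVdef
  have hV : V = V ^ s * V ^ t := by
    rw [← ENNReal.rpow_add_of_nonneg _ _ hs ht, hst, ENNReal.rpow_one]
  grw [← setLAverage_ball_le_centeredMaximal μ v x hr,
    ← setLAverage_ball_le_centeredMaximal μ u x hr]
  simp only [setLAverage_eq, div_eq_mul_inv, ← hVdef]
  calc (∫⁻ y in ball x r, f y ∂μ) * V
      ≤ (∫⁻ y in ball x r, v y ∂μ) ^ s * (∫⁻ y in ball x r, u y ∂μ) ^ t * V := by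
        gcongr
        exact (lintegral_mono_ae (ae_restrict_of_ae h)).trans
          (ENNReal.lintegral_mul_norm_pow_le hv.aemeasurable hu.aemeasurable hs ht hst)
    _ = ((∫⁻ y in ball x r, v y ∂μ) * V) ^ s * ((∫⁻ y in ball x r, u y ∂μ) * V) ^ t := by
        rw [ENNReal.mul_rpow_of_nonneg _ _ hs, ENNReal.mul_rpow_of_nonneg _ _ ht]
        nth_rewrite 1 [hV]
        ring

end CenteredMaximal

section Measurability

variable {E : Type*} [NormedAddCommGroup E] [MeasurableSpace E] [BorelSpace E]

lemma measurable_centeredMaximal (μ : Measure E) [μ.IsAddHaarMeasure] (g : E → ℝ≥0∞) :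
    Measurable (centeredMaximal μ g) := by
  refine (lowerSemicontinuous_iSup fun r => lowerSemicontinuous_iSup fun hr => ?_).measurable
  simp_rw [setLAverage_eq, Measure.addHaar_ball_center]
  exact (ENNReal.continuous_div_const _ (measure_ball_pos μ 0 hr).ne').comp_lowerSemicontinuous
    (lowerSemicontinuous_setLIntegral_ball μ g r) fun a b hab => ENNReal.div_le_div_right hab _

end Measurability

/-! ### The Fefferman–Stein weighted inequality -/

section Haar

variable {E : Type*} [NormedAddCommGroup E] [NormedSpace ℝ E] [FiniteDimensional ℝ E]
  [MeasurableSpace E] [BorelSpace E] {μ : Measure E} [μ.IsAddHaarMeasure] {q : ℝ}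

lemma setLIntegral_closedBall_le_mul_centeredMaximal (w : E → ℝ≥0∞) {x y : E} {r : ℝ} (hr : 0 < r)
    (hy : y ∈ ball x r) :
    ∫⁻ z in closedBall x (5 * r), w z ∂μ ≤
      7 ^ finrank ℝ E * μ (ball x r) * centeredMaximal μ w y := by
  have hsub : closedBall x (5 * r) ⊆ ball y (7 * r) :=
    closedBall_subset_ball' (by linarith [mem_ball'.1 hy])
  have hball : μ (ball y (7 * r)) = 7 ^ finrank ℝ E * μ (ball x r) := by
    rw [Measure.addHaar_ball_mul_of_pos μ y (by norm_num), Measure.addHaar_ball_center μ x,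
      ENNReal.ofReal_pow (by norm_num), ENNReal.ofReal_ofNat]
  rw [← hball]
  exact (lintegral_mono_set hsub).trans
    (setLIntegral_ball_le_mul_centeredMaximal w y (by positivity))

lemma mul_setLIntegral_closedBall_le {g : E → ℝ≥0∞} (hg : Measurable g) (w : E → ℝ≥0∞) {t : ℝ≥0∞}
    {x : E} {r : ℝ} (hr : 0 < r) (ht : t ≤ ⨍⁻ y in ball x r, g y ∂μ) :
    t * ∫⁻ z in closedBall x (5 * r), w z ∂μ ≤
      7 ^ finrank ℝ E * ∫⁻ y in ball x r, centeredMaximal μ w y * g y ∂μ := by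
  set B := ball x r
  set I := ∫⁻ z in closedBall x (5 * r), w z ∂μ with hI
  have hMwg : Measurable fun y => centeredMaximal μ w y * g y :=
    (measurable_centeredMaximal μ w).mul hg
  have hB0 : μ B ≠ 0 := (measure_ball_pos μ x hr).ne'
  have hBtop : μ B ≠ ⊤ := measure_ball_lt_top.ne
  rw [setLAverage_eq, ENNReal.le_div_iff_mul_le (.inl hB0) (.inl hBtop)] at ht
  rw [← ENNReal.mul_le_mul_iff_left hB0 hBtop]
  calc t * I * μ B = I * (t * μ B) := by ring
    _ ≤ ∫⁻ y in B, I * g y ∂μ := by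
        rw [lintegral_const_mul _ hg]
        gcongr
    _ ≤ ∫⁻ y in B, 7 ^ finrank ℝ E * μ B * (centeredMaximal μ w y * g y) ∂μ :=
        setLIntegral_mono' measurableSet_ball fun y hy => by
          grw [hI, setLIntegral_closedBall_le_mul_centeredMaximal w hr hy, mul_assoc (_ * _)]
    _ = 7 ^ finrank ℝ E * (∫⁻ y in B, centeredMaximal μ w y * g y ∂μ) * μ B := by
        rw [lintegral_const_mul _ hMwg]
        ring

/-- The admissible radii are first bounded by `N`, as the Vitali covering lemma requires. -/
lemma mul_withDensity_lt_centeredMaximal_le {g w : E → ℝ≥0∞} (hg : Measurable g) (t : ℝ≥0∞) :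
    t * μ.withDensity w {x | t < centeredMaximal μ g x} ≤
      7 ^ finrank ℝ E * ∫⁻ x, g x ∂μ.withDensity (centeredMaximal μ w) := by
  have hMw := measurable_centeredMaximal μ w
  let s : ℕ → Set E := fun N => {x | ∃ r : ℝ, 0 < r ∧ r ≤ N ∧ t < ⨍⁻ y in ball x r, g y ∂μ}
  have hs : Monotone s := fun M N hMN x ⟨r, hr0, hrM, hr⟩ =>
    ⟨r, hr0, hrM.trans (Nat.cast_le.2 hMN), hr⟩
  have hunion : {x | t < centeredMaximal μ g x} = ⋃ N, s N := by
    refine Subset.antisymm (fun x (hx : t < centeredMaximal μ g x) => ?_)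
      (iUnion_subset fun N x ⟨r, hr0, _, hr⟩ =>
        hr.trans_le (setLAverage_ball_le_centeredMaximal μ g x hr0))
    obtain ⟨r, hr⟩ := lt_iSup_iff.1 hx
    obtain ⟨hr0, hr⟩ := lt_iSup_iff.1 hr
    obtain ⟨N, hN⟩ := exists_nat_ge r
    exact mem_iUnion.2 ⟨N, r, hr0, hN, hr⟩
  rw [hunion, hs.measure_iUnion, ENNReal.mul_iSup]
  refine iSup_le fun N => ?_
  have hcover := measure_le_of_forall_exists_closedBall_le_ball
    (ν := t • μ.withDensity w) (s := s N) (R := N)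
    (ρ := (7 : ℝ≥0∞) ^ finrank ℝ E • μ.withDensity (centeredMaximal μ w * g))
    fun x ⟨r, hr0, hrN, hr⟩ => ⟨r, hr0, hrN, by
      simpa only [Measure.smul_apply, smul_eq_mul, withDensity_apply _ measurableSet_closedBall,
        withDensity_apply _ measurableSet_ball, Pi.mul_apply] using
        mul_setLIntegral_closedBall_le hg w hr0 hr.le⟩
  simpa only [Measure.smul_apply, smul_eq_mul, withDensity_apply _ MeasurableSet.univ,
    Measure.restrict_univ, lintegral_withDensity_eq_lintegral_mul _ hMw hg] using hcover

lemma exists_lintegral_centeredMaximal_rpow_withDensity_le (μ : Measure E) [μ.IsAddHaarMeasure]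
    (hq : 1 < q) :
    ∃ K : ℝ≥0, ∀ g w : E → ℝ≥0∞, Measurable g →
      ∫⁻ x, centeredMaximal μ g x ^ q ∂μ.withDensity w ≤
        K * ∫⁻ x, g x ^ q ∂μ.withDensity (centeredMaximal μ w) := by
  refine ⟨7 ^ finrank ℝ E * (2 ^ q * (q / (q - 1))).toNNReal, fun g w hg => ?_⟩
  simpa [ENNReal.ofReal] using lintegral_rpow_le_of_weakType_one_one hq
    (fun g h hg x => centeredMaximal_add_le hg x)
    (fun g c h x => centeredMaximal_le_of_forall_le h x)
    (fun g _ => measurable_centeredMaximal μ g)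
    (fun g hg t => mul_withDensity_lt_centeredMaximal_le (w := w) hg t) hg

lemma exists_lintegral_centeredMaximal_rpow_le (μ : Measure E) [μ.IsAddHaarMeasure]
    (hq : 1 < q) :
    ∃ K : ℝ≥0, ∀ g : E → ℝ≥0∞, Measurable g →
      ∫⁻ x, centeredMaximal μ g x ^ q ∂μ ≤ K * ∫⁻ x, g x ^ q ∂μ := by
  obtain ⟨K, hK⟩ := exists_lintegral_centeredMaximal_rpow_withDensity_le μ hq
  refine ⟨K, fun g hg => ?_⟩
  have hM : μ.withDensity (centeredMaximal μ 1) ≤ μ := by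
    conv_rhs => rw [← withDensity_one (μ := μ)]
    exact withDensity_mono (.of_forall (centeredMaximal_le_of_forall_le fun _ => le_rfl))
  calc ∫⁻ x, centeredMaximal μ g x ^ q ∂μ
      = ∫⁻ x, centeredMaximal μ g x ^ q ∂μ.withDensity 1 := by rw [withDensity_one]
    _ ≤ K * ∫⁻ x, g x ^ q ∂μ.withDensity (centeredMaximal μ 1) := hK g 1 hg
    _ ≤ K * ∫⁻ x, g x ^ q ∂μ := by gcongr

end Haar

/-! ### The Rubio de Francia majorant -/

lemma tsum_two_inv_pow_mul_rpow_le {q : ℝ} (hq : 0 < q) (c : ℕ → ℝ≥0∞) :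
    (∑' j, 2⁻¹ ^ j * c j) ^ q ≤ 2 ^ q * ∑' j, c j ^ q := by
  rw [← ellNorm_rpow hq, ← ENNReal.mul_rpow_of_nonneg _ _ hq.le]
  gcongr
  calc ∑' j, 2⁻¹ ^ j * c j ≤ ∑' j, 2⁻¹ ^ j * ellNorm q c := by
        gcongr with j
        exact le_ellNorm hq c j
    _ = 2 * ellNorm q c := by
        rw [ENNReal.tsum_mul_right, ENNReal.tsum_geometric, ENNReal.one_sub_inv_two, inv_inv]

/-- The Rubio de Francia series `∑ (2b)⁻ʲ Mʲ F`. When `b` bounds the maximal operator `M` on `L^q`,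
it is an `A₁` weight majorizing `F` with `L^q` norm comparable to that of `F`. -/
def rubioDeFrancia {X : Type*} [PseudoMetricSpace X] [MeasurableSpace X] (μ : Measure X)
    (b : ℝ≥0) (F : X → ℝ≥0∞) (x : X) : ℝ≥0∞ :=
  ∑' j : ℕ, (2 * b : ℝ≥0∞)⁻¹ ^ j * (centeredMaximal μ)^[j] F x

lemma le_rubioDeFrancia {X : Type*} [PseudoMetricSpace X] [MeasurableSpace X] (μ : Measure X)
    (b : ℝ≥0) (F : X → ℝ≥0∞) (x : X) : F x ≤ rubioDeFrancia μ b F x := by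
  simpa [rubioDeFrancia] using
    ENNReal.le_tsum (f := fun j => (2 * b : ℝ≥0∞)⁻¹ ^ j * (centeredMaximal μ)^[j] F x) 0

section RubioDeFrancia

variable {E : Type*} [NormedAddCommGroup E] [MeasurableSpace E] [BorelSpace E] {μ : Measure E}
  [μ.IsAddHaarMeasure] {F : E → ℝ≥0∞} {b : ℝ≥0}

lemma measurable_iterate_centeredMaximal (μ : Measure E) [μ.IsAddHaarMeasure] (hF : Measurable F)
    (j : ℕ) : Measurable ((centeredMaximal μ)^[j] F) := by
  cases j with
  | zero => exact hF
  | succ j =>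
    rw [Function.iterate_succ_apply']
    exact measurable_centeredMaximal μ _

lemma measurable_rubioDeFrancia (μ : Measure E) [μ.IsAddHaarMeasure] (b : ℝ≥0)
    (hF : Measurable F) : Measurable (rubioDeFrancia μ b F) :=
  Measurable.tsum fun j => (measurable_iterate_centeredMaximal μ hF j).const_mul _

lemma centeredMaximal_rubioDeFrancia_le (hF : Measurable F) (hb : b ≠ 0) (x : E) :
    centeredMaximal μ (rubioDeFrancia μ b F) x ≤ 2 * b * rubioDeFrancia μ b F x := by
  calc centeredMaximal μ (rubioDeFrancia μ b F) x
      ≤ ∑' j, (2 * b : ℝ≥0∞)⁻¹ ^ j * centeredMaximal μ ((centeredMaximal μ)^[j] F) x :=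
        centeredMaximal_tsum_le (measurable_iterate_centeredMaximal μ hF) _ x
    _ = 2 * b * ∑' j, (2 * b : ℝ≥0∞)⁻¹ ^ (j + 1) * (centeredMaximal μ)^[j + 1] F x := by
        rw [← ENNReal.tsum_mul_left]
        refine tsum_congr fun j => ?_
        rw [Function.iterate_succ_apply', pow_succ', ← mul_assoc, ← mul_assoc,
          ENNReal.mul_inv_cancel (by simpa using hb) (by finiteness), one_mul]
    _ ≤ 2 * b * rubioDeFrancia μ b F x := by
        gcongr 2 * b * ?_
        exact ENNReal.tsum_comp_le_tsum_of_injective (add_left_injective 1)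
          (fun j => (2 * b : ℝ≥0∞)⁻¹ ^ j * (centeredMaximal μ)^[j] F x)

lemma lintegral_iterate_centeredMaximal_rpow_le {K : ℝ≥0} {q : ℝ} (hF : Measurable F)
    (hM : ∀ g : E → ℝ≥0∞, Measurable g →
      ∫⁻ x, centeredMaximal μ g x ^ q ∂μ ≤ K * ∫⁻ x, g x ^ q ∂μ) (j : ℕ) :
    ∫⁻ x, (centeredMaximal μ)^[j] F x ^ q ∂μ ≤ K ^ j * ∫⁻ x, F x ^ q ∂μ := by
  induction j with
  | zero => simp
  | succ j ih =>
    rw [Function.iterate_succ_apply', pow_succ', mul_assoc]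
    grw [hM _ (measurable_iterate_centeredMaximal μ hF j), ih]

lemma lintegral_rubioDeFrancia_rpow_le {K : ℝ≥0} {q : ℝ} (hq : 0 < q) (hb : b ≠ 0)
    (hKb : (2 * K : ℝ≥0∞) ≤ b ^ q) (hF : Measurable F)
    (hM : ∀ g : E → ℝ≥0∞, Measurable g →
      ∫⁻ x, centeredMaximal μ g x ^ q ∂μ ≤ K * ∫⁻ x, g x ^ q ∂μ) :
    ∫⁻ x, rubioDeFrancia μ b F x ^ q ∂μ ≤ 2 ^ q * (2 * ∫⁻ x, F x ^ q ∂μ) := by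
  have hb' : (b : ℝ≥0∞) ^ q ≠ 0 := by simp [hq.not_gt, hb]
  have hratio : ((b : ℝ≥0∞)⁻¹) ^ q * K ≤ 2⁻¹ := by
    rwa [ENNReal.inv_rpow, mul_comm, ← div_eq_mul_inv, ENNReal.div_le_iff hb' (by finiteness),
      mul_comm, ← div_eq_mul_inv, ENNReal.le_div_iff_mul_le (by simp) (by simp), mul_comm]
  have hmeas (j : ℕ) : Measurable fun x => (b : ℝ≥0∞)⁻¹ ^ j * (centeredMaximal μ)^[j] F x :=
    (measurable_iterate_centeredMaximal μ hF j).const_mul _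
  have hterm (j : ℕ) : ∫⁻ x, ((b : ℝ≥0∞)⁻¹ ^ j * (centeredMaximal μ)^[j] F x) ^ q ∂μ ≤
      2⁻¹ ^ j * ∫⁻ x, F x ^ q ∂μ := by
    simp_rw [ENNReal.mul_rpow_of_nonneg _ _ hq.le]
    rw [lintegral_const_mul _ ((measurable_iterate_centeredMaximal μ hF j).pow_const q)]
    grw [lintegral_iterate_centeredMaximal_rpow_le hF hM j, ← hratio]
    rw [mul_pow, ← mul_assoc, ← ENNReal.rpow_natCast_mul, ← ENNReal.rpow_mul_natCast, mul_comm q]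
  calc ∫⁻ x, rubioDeFrancia μ b F x ^ q ∂μ
      = ∫⁻ x, (∑' j, 2⁻¹ ^ j * ((b : ℝ≥0∞)⁻¹ ^ j * (centeredMaximal μ)^[j] F x)) ^ q ∂μ := by
        simp_rw [← mul_assoc, ← mul_pow, ← ENNReal.mul_inv (.inl two_ne_zero) (.inl ofNat_ne_top)]
        rfl
    _ ≤ ∫⁻ x, 2 ^ q * ∑' j, ((b : ℝ≥0∞)⁻¹ ^ j * (centeredMaximal μ)^[j] F x) ^ q ∂μ := by
        gcongr
        exact tsum_two_inv_pow_mul_rpow_le hq _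
    _ = 2 ^ q * ∑' j, ∫⁻ x, ((b : ℝ≥0∞)⁻¹ ^ j * (centeredMaximal μ)^[j] F x) ^ q ∂μ := by
        rw [lintegral_const_mul _ (Measurable.tsum fun j => (hmeas j).pow_const q),
          lintegral_tsum fun j => ((hmeas j).pow_const q).aemeasurable]
    _ ≤ 2 ^ q * ∑' j, 2⁻¹ ^ j * ∫⁻ x, F x ^ q ∂μ := by
        gcongr with j
        exact hterm j
    _ = 2 ^ q * (2 * ∫⁻ x, F x ^ q ∂μ) := by
        rw [ENNReal.tsum_mul_right, ENNReal.tsum_geometric, ENNReal.one_sub_inv_two, inv_inv]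

end RubioDeFrancia

section Haar

variable {E : Type*} [NormedAddCommGroup E] [NormedSpace ℝ E] [FiniteDimensional ℝ E]
  [MeasurableSpace E] [BorelSpace E] {q : ℝ}

lemma exists_A1_majorant (μ : Measure E) [μ.IsAddHaarMeasure] (hq : 1 < q) :
    ∃ B C : ℝ≥0, ∀ F : E → ℝ≥0∞, Measurable F → ∃ u : E → ℝ≥0∞, Measurable u ∧ (∀ x, F x ≤ u x) ∧
      (∀ x, centeredMaximal μ u x ≤ B * u x) ∧ ∫⁻ x, u x ^ q ∂μ ≤ C * ∫⁻ x, F x ^ q ∂μ := by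
  obtain ⟨K, hK⟩ := exists_lintegral_centeredMaximal_rpow_le μ hq
  have hq0 : 0 < q := zero_lt_one.trans hq
  let b : ℝ≥0 := 2 * K + 1
  have hb : b ≠ 0 := by positivity
  have hKb : (2 * K : ℝ≥0∞) ≤ b ^ q := by
    calc (2 * K : ℝ≥0∞) ≤ b := by simp [b]
      _ ≤ b ^ q := ENNReal.le_rpow_self_of_one_le (by simp [b]) hq.le
  refine ⟨2 * b, 2 ^ q * 2, fun F hF => ⟨rubioDeFrancia μ b F, measurable_rubioDeFrancia μ b hF,
    le_rubioDeFrancia μ b F, fun x => ?_, ?_⟩⟩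
  · exact_mod_cast centeredMaximal_rubioDeFrancia_le hF hb x
  · simpa [ENNReal.coe_rpow_of_nonneg _ hq0.le, mul_assoc] using
      lintegral_rubioDeFrancia_rpow_le hq0 hb hKb hF hK

end Haar

/-! ### Vector-valued estimates -/

section A1Factorization

variable {q r : ℝ}

lemma tsum_mul_rpow_le_ellNorm_rpow (hq : 0 < q) (hqr : q ≤ r) {c : ι → ℝ≥0∞} {U : ℝ≥0∞}
    (hU : ellNorm r c ≤ U) :
    ∑' i, (c i ^ (r / q) * U ^ (1 - r / q)) ^ q ≤ ellNorm r c ^ q := by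
  have hr : 0 < r := hq.trans_le hqr
  have hterm (i : ι) : (c i ^ (r / q) * U ^ (1 - r / q)) ^ q = c i ^ r * U ^ (q - r) := by
    rw [ENNReal.mul_rpow_of_nonneg _ _ hq.le, ← ENNReal.rpow_mul, ← ENNReal.rpow_mul,
      div_mul_cancel₀ _ hq.ne', sub_mul, div_mul_cancel₀ _ hq.ne', one_mul]
  simp_rw [hterm]
  rw [ENNReal.tsum_mul_right, ← ellNorm_rpow hr]
  calc ellNorm r c ^ r * U ^ (q - r)
      = ellNorm r c ^ q * (ellNorm r c ^ (r - q) * U ^ (q - r)) := by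
        rw [← mul_assoc, ← ENNReal.rpow_add_of_nonneg _ _ hq.le (sub_nonneg.2 hqr),
          add_sub_cancel]
    _ ≤ ellNorm r c ^ q * (U ^ (r - q) * (U ^ (r - q))⁻¹) := by
        rw [← ENNReal.rpow_neg, neg_sub]
        gcongr
    _ ≤ ellNorm r c ^ q := mul_le_of_le_one_right' (ENNReal.mul_inv_le_one _)

lemma eq_mul_rpow_mul_rpow {c U : ℝ≥0∞} (hq : 0 < q) (hqr : q < r) (hcU : c ≤ U) (hU : U ≠ ⊤) :
    c = (c ^ (r / q) * U ^ (1 - r / q)) ^ (q / r) * U ^ (1 - q / r) := by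
  have hr : 0 < r := hq.trans hqr
  rcases eq_or_ne U 0 with rfl | hU0
  · rw [ENNReal.zero_rpow_of_pos (sub_pos.2 ((div_lt_one hr).2 hqr)), mul_zero]
    exact le_zero_iff.1 hcU
  rw [ENNReal.mul_rpow_of_nonneg _ _ (by positivity), ← ENNReal.rpow_mul, ← ENNReal.rpow_mul,
    mul_assoc, ← ENNReal.rpow_add _ _ hU0 hU, div_mul_div_cancel₀ hq.ne', div_self hr.ne',
    ENNReal.rpow_one, sub_mul, div_mul_div_cancel₀ hq.ne', div_self hr.ne', one_mul,
    sub_add_sub_cancel, sub_self, ENNReal.rpow_zero, mul_one]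

lemma ellNorm_rpow_le_of_forall_le_mul {c d : ι → ℝ≥0∞} {U : ℝ≥0∞} (hq : 0 < q) (hqr : q < r)
    (h : ∀ i, c i ≤ d i ^ (q / r) * U ^ (1 - q / r)) :
    ellNorm r c ^ q ≤ (∑' i, d i ^ q) ^ (q / r) * (U ^ q) ^ (1 - q / r) := by
  have hr : 0 < r := hq.trans hqr
  calc ellNorm r c ^ q ≤ (∑' i, d i ^ q * U ^ ((1 - q / r) * r)) ^ (q / r) := by
        rw [ellNorm, ← ENNReal.rpow_mul, one_div_mul_eq_div]
        gcongr with i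
        grw [h i]
        rw [ENNReal.mul_rpow_of_nonneg _ _ hr.le, ← ENNReal.rpow_mul, ← ENNReal.rpow_mul,
          div_mul_cancel₀ _ hr.ne']
    _ = (∑' i, d i ^ q) ^ (q / r) * (U ^ q) ^ (1 - q / r) := by
        rw [ENNReal.tsum_mul_right, ENNReal.mul_rpow_of_nonneg _ _ (by positivity),
          ← ENNReal.rpow_mul, ← ENNReal.rpow_mul, mul_assoc, mul_div_cancel₀ _ hr.ne',
          mul_comm q]

variable [Countable ι] {E : Type*} [NormedAddCommGroup E] [MeasurableSpace E] [BorelSpace E]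
  {μ : Measure E} [μ.IsAddHaarMeasure]

lemma lintegral_tsum_centeredMaximal_rpow_le {K : ℝ≥0}
    (hK : ∀ g : E → ℝ≥0∞, Measurable g →
      ∫⁻ x, centeredMaximal μ g x ^ q ∂μ ≤ K * ∫⁻ x, g x ^ q ∂μ)
    {v : ι → E → ℝ≥0∞} (hv : ∀ i, Measurable (v i)) :
    ∫⁻ x, ∑' i, centeredMaximal μ (v i) x ^ q ∂μ ≤ K * ∫⁻ x, ∑' i, v i x ^ q ∂μ := by
  rw [lintegral_tsum fun i => ((measurable_centeredMaximal μ (v i)).pow_const q).aemeasurable,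
    lintegral_tsum fun i => ((hv i).pow_const q).aemeasurable, ← ENNReal.tsum_mul_left]
  exact ENNReal.tsum_le_tsum fun i => hK _ (hv i)

/-- With `u` an `A₁` majorant of `‖a‖_r`, factor `a_k = v_k^{q/r} u^{1-q/r}`: Hölder's inequality on
balls carries the factorization over to `M a_k`, and `∑ v_k^q ≤ ‖a‖_r^q`. -/
lemma lintegral_ellNorm_centeredMaximal_rpow_le_of_A1_majorant (hq : 0 < q) (hqr : q < r)
    {B K : ℝ≥0} (hK : ∀ g : E → ℝ≥0∞, Measurable g →
      ∫⁻ x, centeredMaximal μ g x ^ q ∂μ ≤ K * ∫⁻ x, g x ^ q ∂μ)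
    {a : ι → E → ℝ≥0∞} (ha : ∀ i, Measurable (a i)) {u : E → ℝ≥0∞} (hu : Measurable u)
    (hau : ∀ x, ellNorm r (a · x) ≤ u x) (hu_top : ∀ᵐ x ∂μ, u x ≠ ⊤)
    (hMu : ∀ x, centeredMaximal μ u x ≤ B * u x) :
    ∫⁻ x, ellNorm r (fun i => centeredMaximal μ (a i) x) ^ q ∂μ ≤
      (K * ∫⁻ x, ellNorm r (a · x) ^ q ∂μ) ^ (q / r) * (∫⁻ x, (B * u x) ^ q ∂μ) ^ (1 - q / r) := by
  have hr : 0 < r := hq.trans hqr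
  have hqr1 : 0 ≤ 1 - q / r := sub_nonneg.2 ((div_le_one hr).2 hqr.le)
  have hsum : q / r + (1 - q / r) = 1 := add_sub_cancel _ _
  let v : ι → E → ℝ≥0∞ := fun i x => a i x ^ (r / q) * u x ^ (1 - r / q)
  have hv (i : ι) : Measurable (v i) := ((ha i).pow_const _).mul (hu.pow_const _)
  have hMa (i : ι) (x : E) : centeredMaximal μ (a i) x ≤
      centeredMaximal μ (v i) x ^ (q / r) * (B * u x) ^ (1 - q / r) := by
    grw [← hMu x]
    refine centeredMaximal_le_rpow_mul_rpow (hv i) hu (by positivity) hqr1 hsum ?_ x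
    filter_upwards [hu_top] with x hx
    exact (eq_mul_rpow_mul_rpow hq hqr ((le_ellNorm hr (a · x) i).trans (hau x)) hx).le
  calc ∫⁻ x, ellNorm r (fun i => centeredMaximal μ (a i) x) ^ q ∂μ
      ≤ ∫⁻ x, (∑' i, centeredMaximal μ (v i) x ^ q) ^ (q / r) *
          ((B * u x) ^ q) ^ (1 - q / r) ∂μ :=
        lintegral_mono fun x => ellNorm_rpow_le_of_forall_le_mul hq hqr (hMa · x)
    _ ≤ (∫⁻ x, ∑' i, centeredMaximal μ (v i) x ^ q ∂μ) ^ (q / r) *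
          (∫⁻ x, (B * u x) ^ q ∂μ) ^ (1 - q / r) :=
        ENNReal.lintegral_mul_norm_pow_le
          (Measurable.tsum fun i => (measurable_centeredMaximal μ (v i)).pow_const q).aemeasurable
          ((hu.const_mul _).pow_const q).aemeasurable (by positivity) hqr1 hsum
    _ ≤ (K * ∫⁻ x, ∑' i, v i x ^ q ∂μ) ^ (q / r) * (∫⁻ x, (B * u x) ^ q ∂μ) ^ (1 - q / r) := by
        grw [lintegral_tsum_centeredMaximal_rpow_le hK hv]
    _ ≤ _ := by
        gcongr ?_ ^ _ * _
        gcongr _ * ?_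
        exact lintegral_mono fun x => tsum_mul_rpow_le_ellNorm_rpow hq hqr.le (hau x)

end A1Factorization

section Duality

variable {E : Type*} [NormedAddCommGroup E] [MeasurableSpace E] [BorelSpace E] {μ : Measure E}
  [μ.IsAddHaarMeasure] {q r : ℝ}

lemma setLIntegral_ellNorm_centeredMaximal_rpow_le {K : ℝ≥0} (hr : 0 < r)
    (hK : ∀ g w : E → ℝ≥0∞, Measurable g →
      ∫⁻ x, centeredMaximal μ g x ^ r ∂μ.withDensity w ≤
        K * ∫⁻ x, g x ^ r ∂μ.withDensity (centeredMaximal μ w))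
    [Countable ι] {a : ι → E → ℝ≥0∞} (ha : ∀ i, Measurable (a i)) {s : Set E}
    (hs : MeasurableSet s) :
    ∫⁻ x in s, ellNorm r (fun i => centeredMaximal μ (a i) x) ^ r ∂μ ≤
      K * ∫⁻ x, ellNorm r (a · x) ^ r * centeredMaximal μ (s.indicator 1) x ∂μ := by
  have hMa (i : ι) : Measurable fun x => centeredMaximal μ (a i) x ^ r :=
    (measurable_centeredMaximal μ (a i)).pow_const r
  calc ∫⁻ x in s, ellNorm r (fun i => centeredMaximal μ (a i) x) ^ r ∂μ
      = ∑' i, ∫⁻ x, centeredMaximal μ (a i) x ^ r ∂μ.withDensity (s.indicator 1) := by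
        simp_rw [ellNorm_rpow hr]
        rw [lintegral_tsum fun i => (hMa i).aemeasurable, withDensity_indicator_one hs]
    _ ≤ ∑' i, K * ∫⁻ x, a i x ^ r ∂μ.withDensity (centeredMaximal μ (s.indicator 1)) :=
        ENNReal.tsum_le_tsum fun i => hK _ _ (ha i)
    _ = K * ∫⁻ x, ellNorm r (a · x) ^ r ∂μ.withDensity (centeredMaximal μ (s.indicator 1)) := by
        simp_rw [ellNorm_rpow hr]
        rw [ENNReal.tsum_mul_left, lintegral_tsum fun i => ((ha i).pow_const r).aemeasurable]
    _ = _ := by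
        rw [lintegral_withDensity_eq_lintegral_mul _ (measurable_centeredMaximal μ _)
          ((measurable_ellNorm ha r).pow_const r)]
        simp_rw [Pi.mul_apply, mul_comm]

lemma lintegral_rpow_mul_centeredMaximal_indicator_le {K : ℝ≥0} (hr : 0 < r) (hrq : r < q)
    (hK : ∀ g : E → ℝ≥0∞, Measurable g →
      ∫⁻ x, centeredMaximal μ g x ^ (1 - r / q)⁻¹ ∂μ ≤ K * ∫⁻ x, g x ^ (1 - r / q)⁻¹ ∂μ)
    {F : E → ℝ≥0∞} (hF : Measurable F) {s : Set E} (hs : MeasurableSet s) :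
    ∫⁻ x, F x ^ r * centeredMaximal μ (s.indicator 1) x ∂μ ≤
      (∫⁻ x, F x ^ q ∂μ) ^ (r / q) * (K * μ s) ^ (1 - r / q) := by
  have hq : 0 < q := hr.trans hrq
  have hpos : 0 < 1 - r / q := sub_pos.2 ((div_lt_one hq).2 hrq)
  have hM := measurable_centeredMaximal μ (s.indicator 1)
  calc ∫⁻ x, F x ^ r * centeredMaximal μ (s.indicator 1) x ∂μ
      = ∫⁻ x, (F x ^ q) ^ (r / q) *
          (centeredMaximal μ (s.indicator 1) x ^ (1 - r / q)⁻¹) ^ (1 - r / q) ∂μ := by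
        simp_rw [← ENNReal.rpow_mul, mul_div_cancel₀ _ hq.ne', inv_mul_cancel₀ hpos.ne',
          ENNReal.rpow_one]
    _ ≤ (∫⁻ x, F x ^ q ∂μ) ^ (r / q) *
          (∫⁻ x, centeredMaximal μ (s.indicator 1) x ^ (1 - r / q)⁻¹ ∂μ) ^ (1 - r / q) :=
        ENNReal.lintegral_mul_norm_pow_le (hF.pow_const q).aemeasurable
          (hM.pow_const _).aemeasurable (by positivity) hpos.le (add_sub_cancel _ _)
    _ ≤ (∫⁻ x, F x ^ q ∂μ) ^ (r / q) *
          (K * ∫⁻ x, s.indicator 1 x ^ (1 - r / q)⁻¹ ∂μ) ^ (1 - r / q) := by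
        grw [hK _ (measurable_one.indicator hs)]
    _ = _ := by
        have hpow (x : E) : (s.indicator 1 x : ℝ≥0∞) ^ (1 - r / q)⁻¹ = s.indicator 1 x := by
          by_cases hx : x ∈ s <;> simp [hx, hpos]
        simp_rw [hpow, lintegral_indicator_one hs]

end Duality

section VectorValued

variable [Countable ι] {E : Type*} [NormedAddCommGroup E] [NormedSpace ℝ E]
  [FiniteDimensional ℝ E] [MeasurableSpace E] [BorelSpace E] {p q r : ℝ}

lemma exists_lintegral_ellNorm_centeredMaximal_rpow_le (μ : Measure E) [μ.IsAddHaarMeasure]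
    (hq : 1 < q) (hqr : q < r) :
    ∃ C : ℝ≥0, ∀ a : ι → E → ℝ≥0∞, (∀ i, Measurable (a i)) →
      ∫⁻ x, ellNorm r (fun i => centeredMaximal μ (a i) x) ^ q ∂μ ≤
        C * ∫⁻ x, ellNorm r (a · x) ^ q ∂μ := by
  obtain ⟨K, hK⟩ := exists_lintegral_centeredMaximal_rpow_le μ hq
  obtain ⟨B, C, hmaj⟩ := exists_A1_majorant μ hq
  have hq0 : 0 < q := zero_lt_one.trans hq
  have hr : 0 < r := hq0.trans hqr
  have hqr0 : 0 ≤ q / r := by positivity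
  have hqr1 : 0 ≤ 1 - q / r := sub_nonneg.2 ((div_le_one hr).2 hqr.le)
  refine ⟨K ^ (q / r) * (B ^ q * C) ^ (1 - q / r) + 1, fun a ha => ?_⟩
  obtain ⟨u, hu, hau, hMu, huq⟩ := hmaj _ (measurable_ellNorm ha r)
  set I := ∫⁻ x, ellNorm r (a · x) ^ q ∂μ
  rcases eq_or_ne I ⊤ with hItop | hItop
  · simp [hItop]
  have hu_top : ∀ᵐ x ∂μ, u x ≠ ⊤ := by
    filter_upwards [ae_lt_top (hu.pow_const q) (huq.trans_lt (by finiteness)).ne] with x hx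
    exact ((ENNReal.rpow_lt_top_iff_of_pos hq0).1 hx).ne
  have hBu : ∫⁻ x, (B * u x) ^ q ∂μ ≤ B ^ q * C * I := by
    simp_rw [ENNReal.mul_rpow_of_nonneg _ _ hq0.le]
    grw [lintegral_const_mul _ (hu.pow_const q), huq, mul_assoc]
  calc ∫⁻ x, ellNorm r (fun i => centeredMaximal μ (a i) x) ^ q ∂μ
      ≤ (K * I) ^ (q / r) * (B ^ q * C * I) ^ (1 - q / r) := by
        grw [← hBu]
        exact lintegral_ellNorm_centeredMaximal_rpow_le_of_A1_majorant hq0 hqr hK ha hu hau hu_top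
          hMu
    _ = (K ^ (q / r) * (B ^ q * C) ^ (1 - q / r) : ℝ≥0) * I := by
        rw [ENNReal.mul_rpow_of_nonneg _ _ hqr0, ENNReal.mul_rpow_of_nonneg _ I hqr1,
          mul_mul_mul_comm, ← ENNReal.rpow_add_of_nonneg _ _ hqr0 hqr1, add_sub_cancel,
          ENNReal.rpow_one]
        simp [ENNReal.coe_rpow_of_nonneg, hqr0, hqr1, hq0.le]
    _ ≤ _ := by
        gcongr
        exact le_self_add

/-- By duality it suffices to integrate `‖M a‖_r^r` over sets of finite measure, whose indicators
serve as weights in the Fefferman–Stein inequality. -/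
lemma exists_weakLpNorm_ellNorm_centeredMaximal_rpow_le (μ : Measure E) [μ.IsAddHaarMeasure]
    (hr : 1 < r) (hrq : r < q) :
    ∃ C : ℝ≥0, ∀ a : ι → E → ℝ≥0∞, (∀ i, Measurable (a i)) →
      weakLpNorm (fun x => ellNorm r (fun i => centeredMaximal μ (a i) x)) q μ ^ q ≤
        C * ∫⁻ x, ellNorm r (a · x) ^ q ∂μ := by
  have hr0 : 0 < r := zero_lt_one.trans hr
  have hq0 : 0 < q := hr0.trans hrq
  have hpos : 0 < 1 - r / q := sub_pos.2 ((div_lt_one hq0).2 hrq)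
  have hone : 1 < (1 - r / q)⁻¹ := (one_lt_inv₀ hpos).2 (sub_lt_self _ (by positivity))
  obtain ⟨K, hK⟩ := exists_lintegral_centeredMaximal_rpow_withDensity_le μ hr
  obtain ⟨L, hL⟩ := exists_lintegral_centeredMaximal_rpow_le μ hone
  refine ⟨(K * L ^ (1 - r / q)) ^ (q / r), fun a ha => ?_⟩
  set G : E → ℝ≥0∞ := fun x => ellNorm r (fun i => centeredMaximal μ (a i) x)
  set I := ∫⁻ x, ellNorm r (a · x) ^ q ∂μ
  have hG : Measurable G := measurable_ellNorm (fun i => measurable_centeredMaximal μ (a i)) r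
  have hGr : weakLpNorm (fun x => G x ^ r) (q / r) μ ≤ K * L ^ (1 - r / q) * I ^ (r / q) := by
    refine weakLpNorm_le_of_setLIntegral_le (div_pos hq0 hr0) (hG.pow_const r) fun s hs _ => ?_
    grw [setLIntegral_ellNorm_centeredMaximal_rpow_le hr0 hK ha hs,
      lintegral_rpow_mul_centeredMaximal_indicator_le hr0 hrq hL (measurable_ellNorm ha r) hs,
      ENNReal.mul_rpow_of_nonneg _ _ hpos.le, one_div_div]
    exact le_of_eq (by ring)
  calc weakLpNorm G q μ ^ q = (weakLpNorm G q μ ^ r) ^ (q / r) := by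
        rw [← ENNReal.rpow_mul, mul_div_cancel₀ _ hr0.ne']
    _ ≤ (K * L ^ (1 - r / q) * I ^ (r / q)) ^ (q / r) := by
        grw [weakLpNorm_rpow_le_weakLpNorm_rpow hq0 hr0, hGr]
    _ = ((K * L ^ (1 - r / q)) ^ (q / r) : ℝ≥0) * I := by
        rw [ENNReal.mul_rpow_of_nonneg _ _ (by positivity), ← ENNReal.rpow_mul,
          div_mul_div_cancel₀ hq0.ne', div_self hr0.ne', ENNReal.rpow_one]
        simp [ENNReal.coe_rpow_of_nonneg, hpos.le, div_nonneg, hr0.le, hq0.le]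

theorem vector_valued_maximal_weak_Lp_general (μ : Measure E) [μ.IsAddHaarMeasure] (hr : 1 < r)
    (hp : 1 < p) :
    ∃ C : ℝ, 0 < C ∧ ∀ a : ι → E → ℝ≥0∞, (∀ i, Measurable (a i)) →
      weakLpNorm (fun x => ellNorm r (fun i => centeredMaximal μ (a i) x)) p μ ≤
        ENNReal.ofReal C * weakLpNorm (fun x => ellNorm r (a · x)) p μ := by
  obtain ⟨q₀, hq₀, hq₀_lt⟩ := exists_between (lt_min hp hr)
  obtain ⟨hq₀p, hq₀r⟩ := lt_min_iff.1 hq₀_lt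
  obtain ⟨q₁, hq₁⟩ := exists_gt (max p r)
  obtain ⟨hpq₁, hrq₁⟩ := max_lt_iff.1 hq₁
  have hr0 : 0 < r := zero_lt_one.trans hr
  have hq₀0 : 0 < q₀ := zero_lt_one.trans hq₀
  obtain ⟨C₀, hC₀⟩ := exists_lintegral_ellNorm_centeredMaximal_rpow_le (ι := ι) μ hq₀ hq₀r
  obtain ⟨C₁, hC₁⟩ := exists_weakLpNorm_ellNorm_centeredMaximal_rpow_le (ι := ι) μ hr hrq₁
  set D : ℝ≥0∞ := (2 ^ q₀ * (C₀ * ENNReal.ofReal (p / (p - q₀))) +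
    2 ^ q₁ * (C₁ * ENNReal.ofReal (q₁ / (q₁ - p)))) ^ (1 / p)
  have hD : D ≠ ⊤ := by finiteness
  refine ⟨D.toReal + 1, by positivity, fun a ha => ?_⟩
  have hF := measurable_ellNorm ha r
  suffices h : weakLpNorm (fun x => ellNorm r (fun i => centeredMaximal μ (a i) x)) p μ ≤
      D * weakLpNorm (fun x => ellNorm r (a · x)) p μ by
    grw [h, ENNReal.ofReal_add toReal_nonneg zero_le_one, ENNReal.ofReal_toReal hD, ← le_self_add]
  refine weakLpNorm_le_of_truncation hF hq₀0 hq₀p hpq₁ fun t _ => ?_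
  set s := {x | ENNReal.ofReal t < ellNorm r (a · x)}
  have hs : MeasurableSet s := measurableSet_lt measurable_const hF
  refine ⟨fun x => ellNorm r (fun i => centeredMaximal μ (s.indicator (a i)) x),
    fun x => ellNorm r (fun i => centeredMaximal μ (sᶜ.indicator (a i)) x), fun x => ?_, ?_, ?_⟩
  · grw [← ellNorm_add_le hr.le]
    refine ellNorm_mono hr0.le fun i => ?_
    conv_lhs => rw [← indicator_self_add_compl s (a i)]
    exact centeredMaximal_add_le ((ha i).indicator hs) x
  · simp_rw [← ellNorm_indicator hr0]
    refine (weakLpNorm_rpow_le_lintegral hq₀0 ?_).trans (hC₀ _ fun i => (ha i).indicator hs)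
    exact measurable_ellNorm (fun i => measurable_centeredMaximal μ _) r
  · simp_rw [← ellNorm_indicator hr0]
    exact hC₁ _ fun i => (ha i).indicator hs.compl

end VectorValued

lemma maximal_eq_centeredMaximal {n : ℕ} (f : Rn n → ℂ) (x : Rn n) :
    maximal f x = centeredMaximal volume (fun y => (‖f y‖₊ : ℝ≥0∞)) x := by
  refine iSup_congr fun r => iSup_congr fun _ => ?_
  have hpreimage : (x - ·) ⁻¹' ball x r = ball (0 : Rn n) r := by
    ext y
    simp [dist_eq_norm]
  have hshift := (Measure.measurePreserving_sub_left volume x).setLIntegral_comp_preimage_emb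
    (MeasurableEquiv.subLeft x).measurableEmbedding (fun y => (‖f y‖₊ : ℝ≥0∞)) (ball x r)
  rw [hpreimage] at hshift
  rw [setLAverage_eq, div_eq_mul_inv, mul_comm, Measure.addHaar_ball_center volume x, hshift]

/-- **Vector-valued Hardy–Littlewood maximal inequality in weak Lebesgue spaces**
(Lemma 2.9): for every `1 < p < ∞` there is `C_p > 0` such that for every sequence
`(f_k)` of measurable functions on `ℝⁿ` with `(∑_k |f_k|²)^{1/2} ∈ L^{(p,∞)}`,
`‖(∑_k (M f_k)²)^{1/2}‖_{L^{(p,∞)}} ≤ C_p ‖(∑_k |f_k|²)^{1/2}‖_{L^{(p,∞)}}`. -/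
theorem vector_valued_maximal_weak_Lp
    (n : ℕ) (hn : 1 ≤ n) (p : ℝ) (hp : 1 < p) :
    ∃ C : ℝ, 0 < C ∧ ∀ f : ℕ → Rn n → ℂ, (∀ k, Measurable (f k)) →
      wquasi (fun x => (∑' k : ℕ, (‖f k x‖₊ : ℝ≥0∞) ^ 2) ^ (1 / 2 : ℝ)) p < ⊤ →
      wquasi (fun x => (∑' k : ℕ, (maximal (f k) x) ^ 2) ^ (1 / 2 : ℝ)) p ≤
        ENNReal.ofReal C *
          wquasi (fun x => (∑' k : ℕ, (‖f k x‖₊ : ℝ≥0∞) ^ 2) ^ (1 / 2 : ℝ)) p := by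
  obtain ⟨C, hC, h⟩ := vector_valued_maximal_weak_Lp_general (ι := ℕ) (volume : Measure (Rn n))
    one_lt_two hp
  refine ⟨C, hC, fun f hf _ => ?_⟩
  simpa only [wquasi, weakLpNorm, ellNorm, maximal_eq_centeredMaximal, ENNReal.rpow_two] using
    h (fun k y => ‖f k y‖₊) fun k => (hf k).nnnorm.coe_nnreal_ennreal
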